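/- Let T and S be bounded linear operators on H, each admitting an A-adjoint and each A-selfadjoint. Then ω_A(T+S) ≤ sqrt( ω_A(T + iS)² + ω_A(ST) + ‖T‖_A · ‖S‖_A ) ≤ ω_A(T) + ω_A(S). -/

import Mathlib

noncomputable section

open ContinuousLinearMap

variable {H : Type*} [NormedAddCommGroup H] [InnerProductSpace ℂ H] [CompleteSpace H]

/-- The semi-inner product induced by the positive operator `A`: `⟨x, y⟩_A := ⟨A x, y⟩`. -/
def innA (A : H →L[ℂ] H) (x y : H) : ℂ := inner ℂ (A x) y

/-- The seminorm induced by `A`: `‖x‖_A := ⟨x, x⟩_A ^ (1/2)`. -/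
def vnormA (A : H →L[ℂ] H) (x : H) : ℝ := Real.sqrt (innA A x x).re

/-- The `A`-operator seminorm: `‖T‖_A := sup {‖T x‖_A : ‖x‖_A = 1}`. -/
def opNormA (A T : H →L[ℂ] H) : ℝ :=
  sSup {c : ℝ | ∃ x : H, vnormA A x = 1 ∧ c = vnormA A (T x)}

/-- The `A`-numerical radius: `ω_A(T) := sup {|⟨T x, x⟩_A| : ‖x‖_A = 1}`. -/
def wA (A T : H →L[ℂ] H) : ℝ :=
  sSup {c : ℝ | ∃ x : H, vnormA A x = 1 ∧ c = ‖innA A (T x) x‖}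

/-- `T` admits an `A`-adjoint: there is a bounded operator `X` with `A X = T* A`. -/
def HasAAdjoint (A T : H →L[ℂ] H) : Prop :=
  ∃ X : H →L[ℂ] H, A ∘L X = adjoint T ∘L A

/-- `X` is the reduced `A`-adjoint `T^{♯_A}` of `T`: it solves `A X = T* A` and its range
is contained in the closure of the range of `A`. -/
def IsReducedAAdjoint (A T X : H →L[ℂ] H) : Prop :=
  (A ∘L X = adjoint T ∘L A) ∧ ∀ y : H, X y ∈ closure (Set.range A)

set_option linter.unusedSectionVars false

/-- The Buzano inequality. -/
theorem norm_inner_mul_inner_le_half {e : H} (he : ‖e‖ = 1) (a b : H) :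
    2 * ‖inner ℂ a e * inner ℂ e b‖ ≤ ‖inner ℂ a b‖ + ‖a‖ * ‖b‖ := by
  have hrefl : inner ℂ a ((ℂ ∙ e).reflection b) =
      2 * (inner ℂ a e * inner ℂ e b) - inner ℂ a b := by
    rw [Submodule.reflection_apply, Submodule.starProjection_unit_singleton ℂ he, inner_sub_right,
      two_smul, inner_add_right, inner_smul_right]
    ring
  have hle : ‖inner ℂ a ((ℂ ∙ e).reflection b)‖ ≤ ‖a‖ * ‖b‖ := by
    simpa using norm_inner_le_norm (𝕜 := ℂ) a ((ℂ ∙ e).reflection b)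
  calc 2 * ‖inner ℂ a e * inner ℂ e b‖
      = ‖inner ℂ a b + inner ℂ a ((ℂ ∙ e).reflection b)‖ := by
        rw [hrefl, add_sub_cancel, norm_mul (2 : ℂ)]; norm_num
    _ ≤ ‖inner ℂ a b‖ + ‖a‖ * ‖b‖ := (norm_add_le _ _).trans (by gcongr)

theorem exists_inner_apply_eq_innA {A : H →L[ℂ] H} (hA : A.IsPositive) :
    ∃ P : H →L[ℂ] H, ∀ x y, innA A x y = inner ℂ (P x) (P y) := by
  have hnonneg : 0 ≤ A := (ContinuousLinearMap.nonneg_iff_isPositive A).2 hA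
  refine ⟨CFC.sqrt A, fun x y => ?_⟩
  have hsa : IsSelfAdjoint (CFC.sqrt A) := IsSelfAdjoint.of_nonneg (CFC.sqrt_nonneg A)
  have hadj : adjoint (CFC.sqrt A) = CFC.sqrt A := hsa
  rw [innA, ← adjoint_inner_left, hadj, ← mul_apply_eq_comp, CFC.sqrt_mul_sqrt_self A]

theorem vnormA_eq_norm {A P : H →L[ℂ] H} (hP : ∀ x y, innA A x y = inner ℂ (P x) (P y)) (x : H) :
    vnormA A x = ‖P x‖ := by
  rw [vnormA, hP, inner_self_eq_norm_sq_to_K]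
  norm_cast
  exact Real.sqrt_sq (norm_nonneg _)

theorem inner_apply_comm_of_isSelfAdjoint_mul {A P T : H →L[ℂ] H} (hA : A.IsPositive)
    (hP : ∀ x y, innA A x y = inner ℂ (P x) (P y)) (hT : IsSelfAdjoint (A * T)) (x y : H) :
    inner ℂ (P (T x)) (P y) = inner ℂ (P x) (P (T y)) := by
  have h := hT.isSymmetric x y
  rw [← hP, ← hP]
  exact h.trans (hA.isSymmetric x (T y)).symm

section Symmetric

variable {P T : H →L[ℂ] H}

theorem norm_apply_sq_le_of_inner_apply_comm
    (hT : ∀ x y, inner ℂ (P (T x)) (P y) = inner ℂ (P x) (P (T y))) (x : H) :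
    ‖P (T x)‖ ^ 2 ≤ ‖P (T (T x))‖ * ‖P x‖ := by
  have h : ‖P (T x)‖ ^ 2 = ‖inner ℂ (P (T (T x))) (P x)‖ := by
    rw [hT, inner_self_eq_norm_sq_to_K]; simp
  exact h ▸ norm_inner_le_norm _ _

theorem norm_apply_pow_le_of_inner_apply_comm
    (hT : ∀ x y, inner ℂ (P (T x)) (P y) = inner ℂ (P x) (P (T y))) {x : H} (hx : ‖P x‖ = 1)
    (n : ℕ) : ‖P (T x)‖ * ‖P ((T ^ n) x)‖ ≤ ‖P ((T ^ (n + 1)) x)‖ := by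
  induction n with
  | zero => simp [hx]
  | succ n ih =>
    have h := norm_apply_sq_le_of_inner_apply_comm hT ((T ^ n) x)
    simp only [pow_succ', mul_apply_eq_comp] at ih ⊢
    rcases (norm_nonneg (P (T ((T ^ n) x)))).eq_or_lt with h0 | h0
    · rw [← h0, mul_zero]; exact norm_nonneg _
    · refine le_of_mul_le_mul_right ?_ h0
      nlinarith [norm_nonneg (P (T x)), norm_nonneg (P (T (T ((T ^ n) x)))),
        mul_le_mul_of_nonneg_left h (norm_nonneg (P (T x))),
        mul_le_mul_of_nonneg_left ih (norm_nonneg (P (T (T ((T ^ n) x)))))]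

/-- The bound of Krein: a bounded operator which is symmetric for a continuous semi-inner product is
bounded for the associated seminorm, with the same constant. -/
theorem norm_apply_le_of_inner_apply_comm
    (hT : ∀ x y, inner ℂ (P (T x)) (P y) = inner ℂ (P x) (P (T y))) {x : H} (hx : ‖P x‖ = 1) :
    ‖P (T x)‖ ≤ ‖T‖ := by
  have hpow (n : ℕ) : ‖P (T x)‖ ^ n ≤ ‖P ((T ^ n) x)‖ := by
    induction n with
    | zero => simp [hx]
    | succ n ih =>
      refine le_trans ?_ (norm_apply_pow_le_of_inner_apply_comm hT hx n)
      rw [pow_succ']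
      gcongr
  have hT1 (n : ℕ) : ‖(T ^ n) x‖ ≤ ‖T‖ ^ n * ‖x‖ := by
    induction n with
    | zero => simp
    | succ n ih =>
      rw [pow_succ', mul_apply_eq_comp, pow_succ', mul_assoc]
      exact (T.le_opNorm _).trans (by gcongr)
  have hbound (n : ℕ) : ‖P (T x)‖ ^ n ≤ ‖P‖ * ‖x‖ * ‖T‖ ^ n := by
    refine (hpow n).trans ((P.le_opNorm _).trans ?_)
    rw [mul_assoc, mul_comm ‖x‖]
    exact mul_le_mul_of_nonneg_left (hT1 n) (norm_nonneg _)
  by_contra! hlt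
  rcases (norm_nonneg T).eq_or_lt with h0 | h0
  · have := hbound 1
    rw [← h0] at this hlt
    simp at this
    simp [this] at hlt
  · obtain ⟨n, hn⟩ := pow_unbounded_of_one_lt (‖P‖ * ‖x‖) ((one_lt_div h0).2 hlt)
    rw [div_pow, lt_div_iff₀ (by positivity)] at hn
    exact (hbound n).not_gt hn

theorem four_mul_re_inner_eq
    (hT : ∀ x y, inner ℂ (P (T x)) (P y) = inner ℂ (P x) (P (T y))) (x y : H) :
    4 * (inner ℂ (P (T x)) (P y)).re =
      (inner ℂ (P (T (x + y))) (P (x + y))).re - (inner ℂ (P (T (x - y))) (P (x - y))).re := by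
  have h : (inner ℂ (P (T y)) (P x)).re = (inner ℂ (P (T x)) (P y)).re := by
    rw [hT, ← inner_conj_symm, Complex.conj_re]
  simp only [map_add, map_sub, inner_add_left, inner_add_right, inner_sub_left, inner_sub_right,
    Complex.add_re, Complex.sub_re, h]
  ring

theorem norm_apply_le_of_norm_inner_apply_self_le
    (hT : ∀ x y, inner ℂ (P (T x)) (P y) = inner ℂ (P x) (P (T y))) {w : ℝ}
    (hw : ∀ x, ‖P x‖ = 1 → ‖inner ℂ (P (T x)) (P x)‖ ≤ w) {x : H} (hx : ‖P x‖ = 1) :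
    ‖P (T x)‖ ≤ w := by
  have hquad (z : H) : ‖inner ℂ (P (T z)) (P z)‖ ≤ w * ‖P z‖ ^ 2 := by
    rcases (norm_nonneg (P z)).eq_or_lt with h0 | h0
    · simp [norm_eq_zero.1 h0.symm]
    · have h := hw (((‖P z‖⁻¹ : ℝ) : ℂ) • z) (by
        rw [map_smul, norm_smul, Complex.norm_real, norm_inv, norm_norm, inv_mul_cancel₀ h0.ne'])
      simp only [map_smul, inner_smul_left, inner_smul_right, norm_mul, Complex.conj_ofReal,
        Complex.norm_real, norm_inv, norm_norm] at h
      rw [← mul_assoc, ← mul_inv, inv_mul_le_iff₀ (by positivity)] at h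
      linarith
  rcases (norm_nonneg (P (T x))).eq_or_lt with h0 | h0
  · rw [← h0]; exact (norm_nonneg _).trans (hw x hx)
  set y : H := ((‖P (T x)‖⁻¹ : ℝ) : ℂ) • T x with hy
  have hPy : ‖P y‖ = 1 := by
    rw [hy, map_smul, norm_smul, Complex.norm_real, norm_inv, norm_norm, inv_mul_cancel₀ h0.ne']
  have hre : (inner ℂ (P (T x)) (P y)).re = ‖P (T x)‖ := by
    rw [hy, map_smul, inner_smul_right, inner_self_eq_norm_sq_to_K, Complex.re_ofReal_mul]
    norm_cast
    change ‖P (T x)‖⁻¹ * ‖P (T x)‖ ^ 2 = ‖P (T x)‖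
    field_simp
  have hpolar := four_mul_re_inner_eq hT x y
  have hpar := parallelogram_law_with_norm ℂ (P x) (P y)
  rw [← map_add, ← map_sub, hx, hPy] at hpar
  have h1 := (abs_le.1 ((Complex.abs_re_le_norm _).trans (hquad (x + y)))).2
  have h2 := (abs_le.1 ((Complex.abs_re_le_norm _).trans (hquad (x - y)))).1
  rw [hre] at hpolar
  linear_combination (1 / 4) * h1 + (1 / 4) * h2 + (1 / 4) * hpolar + (w / 4) * hpar

theorem inner_apply_self_eq_ofReal
    (hT : ∀ x y, inner ℂ (P (T x)) (P y) = inner ℂ (P x) (P (T y))) (x : H) :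
    ∃ t : ℝ, inner ℂ (P (T x)) (P x) = t :=
  ⟨_, (Complex.conj_eq_iff_re.1 (by rw [inner_conj_symm, hT])).symm⟩

end Symmetric

section Radius

variable {A P : H →L[ℂ] H}

theorem wA_nonneg (A T : H →L[ℂ] H) : 0 ≤ wA A T :=
  Real.sSup_nonneg (by rintro _ ⟨x, -, rfl⟩; exact norm_nonneg _)

theorem opNormA_nonneg (A T : H →L[ℂ] H) : 0 ≤ opNormA A T :=
  Real.sSup_nonneg (by rintro _ ⟨x, -, rfl⟩; exact Real.sqrt_nonneg _)

theorem wA_le (hP : ∀ x y, innA A x y = inner ℂ (P x) (P y))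
    {T : H →L[ℂ] H} {c : ℝ} (hc : 0 ≤ c)
    (h : ∀ x, ‖P x‖ = 1 → ‖inner ℂ (P (T x)) (P x)‖ ≤ c) : wA A T ≤ c := by
  refine Real.sSup_le ?_ hc
  rintro _ ⟨x, hx, rfl⟩
  rw [hP]
  exact h x (vnormA_eq_norm hP x ▸ hx)

theorem norm_inner_le_wA (hP : ∀ x y, innA A x y = inner ℂ (P x) (P y))
    {T : H →L[ℂ] H} {c : ℝ}
    (h : ∀ x, ‖P x‖ = 1 → ‖inner ℂ (P (T x)) (P x)‖ ≤ c) {x : H} (hx : ‖P x‖ = 1) :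
    ‖inner ℂ (P (T x)) (P x)‖ ≤ wA A T := by
  refine le_csSup ⟨c, ?_⟩ ⟨x, by rw [vnormA_eq_norm hP, hx], by rw [hP]⟩
  rintro _ ⟨y, hy, rfl⟩
  rw [hP]
  exact h y (vnormA_eq_norm hP y ▸ hy)

theorem opNormA_le (hP : ∀ x y, innA A x y = inner ℂ (P x) (P y))
    {T : H →L[ℂ] H} {c : ℝ} (hc : 0 ≤ c)
    (h : ∀ x, ‖P x‖ = 1 → ‖P (T x)‖ ≤ c) : opNormA A T ≤ c := by
  refine Real.sSup_le ?_ hc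
  rintro _ ⟨x, hx, rfl⟩
  rw [vnormA_eq_norm hP]
  exact h x (vnormA_eq_norm hP x ▸ hx)

theorem norm_apply_le_opNormA (hP : ∀ x y, innA A x y = inner ℂ (P x) (P y))
    {T : H →L[ℂ] H} {c : ℝ}
    (h : ∀ x, ‖P x‖ = 1 → ‖P (T x)‖ ≤ c) {x : H} (hx : ‖P x‖ = 1) :
    ‖P (T x)‖ ≤ opNormA A T := by
  refine le_csSup ⟨c, ?_⟩ ⟨x, by rw [vnormA_eq_norm hP, hx], by rw [vnormA_eq_norm hP]⟩
  rintro _ ⟨y, hy, rfl⟩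
  rw [vnormA_eq_norm hP]
  exact h y (vnormA_eq_norm hP y ▸ hy)

end Radius

theorem stmt11 (A : H →L[ℂ] H) (hA : A.IsPositive) (hA0 : A ≠ 0)
    (T S : H →L[ℂ] H) (hT : HasAAdjoint A T) (hS : HasAAdjoint A S)
    (hTsa : IsSelfAdjoint (A * T)) (hSsa : IsSelfAdjoint (A * S)) :
    wA A (T + S) ≤
        Real.sqrt (wA A (T + Complex.I • S) ^ 2 + wA A (S * T) +
          opNormA A T * opNormA A S) ∧
      Real.sqrt (wA A (T + Complex.I • S) ^ 2 + wA A (S * T) +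
          opNormA A T * opNormA A S) ≤
        wA A T + wA A S := by
  obtain ⟨P, hP⟩ := exists_inner_apply_eq_innA hA
  have hTs := inner_apply_comm_of_isSelfAdjoint_mul hA hP hTsa
  have hSs := inner_apply_comm_of_isSelfAdjoint_mul hA hP hSsa
  have hTn {x : H} (hx : ‖P x‖ = 1) : ‖P (T x)‖ ≤ opNormA A T :=
    norm_apply_le_opNormA hP (fun _ => norm_apply_le_of_inner_apply_comm hTs) hx
  have hSn {x : H} (hx : ‖P x‖ = 1) : ‖P (S x)‖ ≤ opNormA A S :=
    norm_apply_le_opNormA hP (fun _ => norm_apply_le_of_inner_apply_comm hSs) hx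
  have hinner {R : H →L[ℂ] H} {c : ℝ} (h : ∀ x, ‖P x‖ = 1 → ‖P (R x)‖ ≤ c) (x : H)
      (hx : ‖P x‖ = 1) : ‖inner ℂ (P (R x)) (P x)‖ ≤ c :=
    (norm_inner_le_norm _ _).trans (by rw [hx, mul_one]; exact h x hx)
  have hTw {x : H} (hx : ‖P x‖ = 1) : ‖inner ℂ (P (T x)) (P x)‖ ≤ wA A T :=
    norm_inner_le_wA hP (hinner fun _ => hTn) hx
  have hSw {x : H} (hx : ‖P x‖ = 1) : ‖inner ℂ (P (S x)) (P x)‖ ≤ wA A S :=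
    norm_inner_le_wA hP (hinner fun _ => hSn) hx
  have hSTn (x : H) (hx : ‖P x‖ = 1) :
      ‖inner ℂ (P ((S * T) x)) (P x)‖ ≤ opNormA A T * opNormA A S := by
    rw [mul_apply_eq_comp, hSs]
    exact (norm_inner_le_norm _ _).trans
      (mul_le_mul (hTn hx) (hSn hx) (norm_nonneg _) (opNormA_nonneg A T))
  have hcart {x : H} {t s : ℝ} (ht : inner ℂ (P (T x)) (P x) = t)
      (hs : inner ℂ (P (S x)) (P x) = s) :
      ‖inner ℂ (P ((T + Complex.I • S) x)) (P x)‖ ^ 2 = t ^ 2 + s ^ 2 := by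
    rw [add_apply, smul_apply, map_add, map_smul, inner_add_left, inner_smul_left, ht, hs,
      ← Complex.normSq_eq_norm_sq, Complex.normSq_apply]
    simp
    ring
  have hcartn (x : H) (hx : ‖P x‖ = 1) :
      ‖inner ℂ (P ((T + Complex.I • S) x)) (P x)‖ ≤ √(wA A T ^ 2 + wA A S ^ 2) := by
    obtain ⟨t, ht⟩ := inner_apply_self_eq_ofReal hTs x
    obtain ⟨s, hs⟩ := inner_apply_self_eq_ofReal hSs x
    have h1 := hTw hx
    have h2 := hSw hx
    rw [ht, Complex.norm_real, Real.norm_eq_abs] at h1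
    rw [hs, Complex.norm_real, Real.norm_eq_abs] at h2
    refine Real.le_sqrt_of_sq_le ?_
    rw [hcart ht hs, ← sq_abs t, ← sq_abs s]
    gcongr
  constructor
  · refine wA_le hP (Real.sqrt_nonneg _) fun x hx => Real.le_sqrt_of_sq_le ?_
    obtain ⟨t, ht⟩ := inner_apply_self_eq_ofReal hTs x
    obtain ⟨s, hs⟩ := inner_apply_self_eq_ofReal hSs x
    have hsum : ‖inner ℂ (P ((T + S) x)) (P x)‖ ^ 2 = (t + s) ^ 2 := by
      rw [add_apply, map_add, inner_add_left, ht, hs, ← Complex.ofReal_add, Complex.norm_real,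
        Real.norm_eq_abs, sq_abs]
    have hbuz := norm_inner_mul_inner_le_half hx (P (T x)) (P (S x))
    rw [← hSs x x, ht, hs, ← Complex.ofReal_mul, Complex.norm_real, Real.norm_eq_abs] at hbuz
    have hST : ‖inner ℂ (P (T x)) (P (S x))‖ ≤ wA A (S * T) := by
      rw [← hSs, ← mul_apply_eq_comp]
      exact norm_inner_le_wA hP hSTn hx
    have hmul : ‖P (T x)‖ * ‖P (S x)‖ ≤ opNormA A T * opNormA A S :=
      mul_le_mul (hTn hx) (hSn hx) (norm_nonneg _) (opNormA_nonneg A T)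
    have hsq : t ^ 2 + s ^ 2 ≤ wA A (T + Complex.I • S) ^ 2 := by
      rw [← hcart ht hs]
      gcongr
      exact norm_inner_le_wA hP hcartn hx
    rw [hsum]
    linarith [le_abs_self (t * s), add_sq t s]
  · have hTnw : opNormA A T ≤ wA A T := opNormA_le hP (wA_nonneg A T) fun _ =>
      norm_apply_le_of_norm_inner_apply_self_le hTs fun _ => hTw
    have hSnw : opNormA A S ≤ wA A S := opNormA_le hP (wA_nonneg A S) fun _ =>
      norm_apply_le_of_norm_inner_apply_self_le hSs fun _ => hSw
    have hmul : opNormA A T * opNormA A S ≤ wA A T * wA A S :=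
      mul_le_mul hTnw hSnw (opNormA_nonneg A S) (wA_nonneg A T)
    have hST : wA A (S * T) ≤ opNormA A T * opNormA A S :=
      wA_le hP (mul_nonneg (opNormA_nonneg A T) (opNormA_nonneg A S)) hSTn
    have hsq : wA A (T + Complex.I • S) ^ 2 ≤ wA A T ^ 2 + wA A S ^ 2 :=
      (Real.le_sqrt (wA_nonneg _ _) (by positivity)).1 (wA_le hP (Real.sqrt_nonneg _) hcartn)
    refine Real.sqrt_le_iff.2 ⟨add_nonneg (wA_nonneg A T) (wA_nonneg A S), ?_⟩
    linarith [add_sq (wA A T) (wA A S)]
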